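/- arXiv:1403.4911 — 5 statements merged into one kernel-verified Lean document; each statement's English description precedes it below -/
import Mathlib

section
/- Every bounded curvature path that has a self-intersection (i.e., there exist parameters t₁ < t₂ in its domain with γ(t₁) = γ(t₂)) is a free path. -/
noncomputable section

/-- The Euclidean plane. -/
abbrev E2 := EuclideanSpace ℝ (Fin 2)

/-- `γ : [0, s] → ℝ²` is a bounded curvature path (with curvature bound normalized to 1)
with derivative function `γ'`: it is `C¹` (it has the continuous derivative `γ'`),
parametrized by arc length, and piecewise `C²` with `‖γ''‖ ≤ 1` wherever the second
derivative is defined (off a finite set of break parameters). -/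
def IsBCPath (s : ℝ) (γ γ' : ℝ → E2) : Prop :=
  0 ≤ s ∧
  (∀ t ∈ Set.Icc 0 s, HasDerivAt γ (γ' t) t) ∧
  ContinuousOn γ' (Set.Icc 0 s) ∧
  (∀ t ∈ Set.Icc 0 s, ‖γ' t‖ = 1) ∧
  ∃ D : Finset ℝ, ∀ t ∈ Set.Icc 0 s, t ∉ D →
    ∃ a : E2, ‖a‖ ≤ 1 ∧ HasDerivAt γ' a t

/-- Membership in `Γ(x,y)`: a bounded curvature path with endpoint condition
`(x, X)`, `(y, Y)`. -/
def InGamma (x X y Y : E2) (s : ℝ) (γ γ' : ℝ → E2) : Prop :=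
  IsBCPath s γ γ' ∧ γ 0 = x ∧ γ' 0 = X ∧ γ s = y ∧ γ' s = Y

/-- A bounded curvature homotopy: a continuous one-parameter family, indexed by
`p ∈ [0,1]`, of bounded curvature paths `H p : [0, sl p] → ℝ²` (with derivative
`H' p`), all in `Γ(x,y)`.  Continuity is required for the length function and,
jointly, for the family reparametrized on the unit square. -/
def IsBCHomotopy (x X y Y : E2) (sl : ℝ → ℝ) (H H' : ℝ → ℝ → E2) : Prop :=
  (∀ p ∈ Set.Icc (0:ℝ) 1, InGamma x X y Y (sl p) (H p) (H' p)) ∧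
  ContinuousOn sl (Set.Icc 0 1) ∧
  ContinuousOn (fun q : ℝ × ℝ => H q.1 (q.2 * sl q.1))
    (Set.Icc 0 1 ×ˢ Set.Icc 0 1)

/-- Two bounded curvature paths with the same endpoint condition `(x,X),(y,Y)` are
bounded-homotopic if a bounded curvature homotopy deforms one into the other. -/
def BoundedHomotopic (x X y Y : E2) (s₀ : ℝ) (γ γ' : ℝ → E2)
    (s₁ : ℝ) (η η' : ℝ → E2) : Prop :=
  ∃ sl H H', IsBCHomotopy x X y Y sl H H' ∧
    sl 0 = s₀ ∧ sl 1 = s₁ ∧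
    Set.EqOn (H 0) γ (Set.Icc 0 s₀) ∧ Set.EqOn (H' 0) γ' (Set.Icc 0 s₀) ∧
    Set.EqOn (H 1) η (Set.Icc 0 s₁) ∧ Set.EqOn (H' 1) η' (Set.Icc 0 s₁)

/-- A bounded curvature path is free if, for every `L > 0`, it is bounded-homotopic
(within `Γ(x,y)` for its own endpoint condition) to a bounded curvature path of
length at least `L`. -/
def IsFreePath (s : ℝ) (γ γ' : ℝ → E2) : Prop :=
  ∀ L > 0, ∃ s' η η', L ≤ s' ∧
    BoundedHomotopic (γ 0) (γ' 0) (γ s) (γ' s) s γ γ' s' η η'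

/-!
If `γ a = γ b`, dilate the loop `γ|[a, b]` about its base point `γ a` by a factor `k ≥ 1`, run
through it at unit speed, and leave the rest of the path alone. The dilation preserves unit tangent
vectors, so the new path is still `C¹`; it fixes `γ a = γ b`, so the pieces still fit together; and
it divides the curvature of the loop by `k`. The length grows by `(k - 1) * (b - a)`. Letting `k`
increase from `1` therefore gives a bounded curvature homotopy to arbitrarily long paths.
-/

open Set

/-- The parameter in `[a, b]` of the point of the loop that corresponds to the parameter `t` of
the path in which the loop `[a, b]` has been dilated by `k`. It is clamped to the endpoints `a` and
`b` outside of the interval `[a, b + (k - 1) * (b - a)]` occupied by the dilated loop. -/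
def loopParam (a b k t : ℝ) : ℝ := max a (min b (a + (t - a) / k))

/-- The parameter of the original path that corresponds to the parameter `t` of the path in which
the loop `[a, b]` has been dilated by `k`. It has slope `1 / k` along the dilated loop and slope `1`
elsewhere. -/
def dilationParam (a b k t : ℝ) : ℝ := t - (k - 1) * (loopParam a b k t - a)

/-- The path obtained from `γ` by dilating the loop `γ|[a, b]` about its base point `γ a` by the
factor `k`, keeping the speed. Since `loopParam` is clamped, one formula covers the parameters
before, along and after the loop. -/
def dilateLoop {E : Type*} [AddCommGroup E] [Module ℝ E] (γ : ℝ → E) (a b k t : ℝ) : E :=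
  γ (dilationParam a b k t) + (k - 1) • (γ (loopParam a b k t) - γ a)

section Parameters

variable {a b k t : ℝ}

lemma loopParam_mem_Icc (hab : a ≤ b) (k t : ℝ) : loopParam a b k t ∈ Icc a b :=
  ⟨le_max_left _ _, max_le hab (min_le_left _ _)⟩

lemma loopParam_of_le (hab : a ≤ b) (hk : 0 ≤ k) (ht : t ≤ a) : loopParam a b k t = a := by
  have : (t - a) / k ≤ 0 := div_nonpos_of_nonpos_of_nonneg (by linarith) hk
  rw [loopParam, min_eq_right (by linarith), max_eq_left (by linarith)]

lemma loopParam_of_mem_Icc (hk : 0 < k) (ht : t ∈ Icc a (b + (k - 1) * (b - a))) :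
    loopParam a b k t = a + (t - a) / k := by
  have h_nonneg : 0 ≤ (t - a) / k := div_nonneg (by linarith [ht.1]) hk.le
  have h_le : (t - a) / k ≤ b - a := by
    rw [div_le_iff₀ hk]
    linarith [ht.2]
  rw [loopParam, min_eq_right (by linarith), max_eq_right (by linarith)]

lemma loopParam_of_ge (hab : a ≤ b) (hk : 0 < k) (ht : b + (k - 1) * (b - a) ≤ t) :
    loopParam a b k t = b := by
  have h_le : b - a ≤ (t - a) / k := by
    rw [le_div_iff₀ hk]
    linarith
  rw [loopParam, min_eq_left (by linarith), max_eq_right hab]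

lemma loopParam_sub_loopParam_le {x y : ℝ} (hk : 0 ≤ k) (hxy : x ≤ y) :
    loopParam a b k y - loopParam a b k x ≤ (y - x) / k := by
  have h_nonneg : 0 ≤ (y - x) / k := div_nonneg (by linarith) hk
  have h_split : (y - a) / k = (x - a) / k + (y - x) / k := by ring
  rw [loopParam, loopParam, h_split]
  grind

lemma dilationParam_of_le (hab : a ≤ b) (hk : 0 ≤ k) (ht : t ≤ a) :
    dilationParam a b k t = t := by
  rw [dilationParam, loopParam_of_le hab hk ht]
  ring

lemma dilationParam_of_mem_Icc (hk : 0 < k) (ht : t ∈ Icc a (b + (k - 1) * (b - a))) :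
    dilationParam a b k t = a + (t - a) / k := by
  rw [dilationParam, loopParam_of_mem_Icc hk ht]
  field

lemma dilationParam_of_ge (hab : a ≤ b) (hk : 0 < k) (ht : b + (k - 1) * (b - a) ≤ t) :
    dilationParam a b k t = t - (k - 1) * (b - a) := by
  rw [dilationParam, loopParam_of_ge hab hk ht]

lemma dilationParam_add_mul_sub (hab : a ≤ b) (hk : 0 < k) (ht : b ≤ t) :
    dilationParam a b k (t + (k - 1) * (b - a)) = t := by
  rw [dilationParam_of_ge hab hk (by linarith), add_sub_cancel_right]

@[simp]
lemma dilationParam_one (a b t : ℝ) : dilationParam a b 1 t = t := by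
  simp [dilationParam]

lemma dilationParam_strictMono (a b : ℝ) (hk : 1 ≤ k) : StrictMono (dilationParam a b k) := by
  intro x y hxy
  have hk₀ : 0 < k := by linarith
  have h_loop : (k - 1) * (loopParam a b k y - loopParam a b k x) ≤ (k - 1) * ((y - x) / k) :=
    mul_le_mul_of_nonneg_left (loopParam_sub_loopParam_le hk₀.le hxy.le) (by linarith)
  have h_split : (k - 1) * ((y - x) / k) = (y - x) - (y - x) / k := by field
  have h_pos : 0 < (y - x) / k := div_pos (sub_pos.2 hxy) hk₀
  simp only [dilationParam]
  linarith

lemma mapsTo_dilationParam {s : ℝ} (ha : 0 ≤ a) (hab : a ≤ b) (hb : b ≤ s) (hk : 1 ≤ k) :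
    MapsTo (dilationParam a b k) (Icc 0 (s + (k - 1) * (b - a))) (Icc 0 s) := by
  have h := (dilationParam_strictMono a b hk).monotone.mapsTo_Icc
    (a := 0) (b := s + (k - 1) * (b - a))
  rwa [dilationParam_of_le hab (by linarith) ha,
    dilationParam_add_mul_sub hab (by linarith) hb] at h

lemma hasDerivAt_add_sub_div (a k t : ℝ) : HasDerivAt (fun u => a + (u - a) / k) k⁻¹ t := by
  simpa using (((hasDerivAt_id t).sub_const a).div_const k).const_add a

lemma exists_hasDerivAt_dilationParam (hab : a ≤ b) (hk : 1 ≤ k) (hta : t ≠ a)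
    (htb : t ≠ b + (k - 1) * (b - a)) :
    ∃ r ∈ Icc (0 : ℝ) 1, HasDerivAt (dilationParam a b k) r t := by
  have hk₀ : 0 < k := by linarith
  rcases hta.lt_or_gt with h_before | h_after
  · refine ⟨1, by simp, (hasDerivAt_id t).congr_of_eventuallyEq ?_⟩
    filter_upwards [Iio_mem_nhds h_before] with u hu
    exact dilationParam_of_le hab hk₀.le hu.le
  rcases htb.lt_or_gt with h_along | h_beyond
  · refine ⟨k⁻¹, ⟨by positivity, inv_le_one_of_one_le₀ hk⟩,
      (hasDerivAt_add_sub_div a k t).congr_of_eventuallyEq ?_⟩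
    filter_upwards [Icc_mem_nhds h_after h_along] with u hu
    exact dilationParam_of_mem_Icc hk₀ hu
  · refine ⟨1, by simp,
      ((hasDerivAt_id t).sub_const ((k - 1) * (b - a))).congr_of_eventuallyEq ?_⟩
    filter_upwards [Ioi_mem_nhds h_beyond] with u hu
    exact dilationParam_of_ge hab hk₀ hu.le

lemma continuousOn_loopParam (a b : ℝ) :
    ContinuousOn (fun q : ℝ × ℝ => loopParam a b q.1 q.2) {q | q.1 ≠ 0} := by
  have h_div : ContinuousOn (fun q : ℝ × ℝ => (q.2 - a) / q.1) {q | q.1 ≠ 0} :=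
    ContinuousOn.div (by fun_prop) (by fun_prop) fun _ hq => hq
  unfold loopParam
  fun_prop

lemma continuousOn_dilationParam (a b : ℝ) :
    ContinuousOn (fun q : ℝ × ℝ => dilationParam a b q.1 q.2) {q | q.1 ≠ 0} := by
  have h_loop := continuousOn_loopParam a b
  unfold dilationParam
  fun_prop

lemma continuous_dilationParam (a b k : ℝ) : Continuous (dilationParam a b k) := by
  unfold dilationParam loopParam
  fun_prop

end Parameters

section Dilation

variable {E : Type*} [AddCommGroup E] [Module ℝ E] {γ : ℝ → E} {a b k t : ℝ}

@[simp]
lemma dilateLoop_one (γ : ℝ → E) (a b t : ℝ) : dilateLoop γ a b 1 t = γ t := by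
  simp [dilateLoop]

lemma dilateLoop_of_le (γ : ℝ → E) (hab : a ≤ b) (hk : 0 ≤ k) (ht : t ≤ a) :
    dilateLoop γ a b k t = γ t := by
  simp [dilateLoop, dilationParam_of_le hab hk ht, loopParam_of_le hab hk ht]

lemma dilateLoop_of_mem_Icc (γ : ℝ → E) (hk : 0 < k)
    (ht : t ∈ Icc a (b + (k - 1) * (b - a))) :
    dilateLoop γ a b k t = γ a + k • (γ (a + (t - a) / k) - γ a) := by
  rw [dilateLoop, dilationParam_of_mem_Icc hk ht, loopParam_of_mem_Icc hk ht]
  module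

lemma dilateLoop_of_ge (hγ : γ a = γ b) (hab : a ≤ b) (hk : 0 < k)
    (ht : b + (k - 1) * (b - a) ≤ t) :
    dilateLoop γ a b k t = γ (t - (k - 1) * (b - a)) := by
  simp [dilateLoop, dilationParam_of_ge hab hk ht, loopParam_of_ge hab hk ht, hγ]

end Dilation

section Calculus

variable {E : Type*} [NormedAddCommGroup E] [NormedSpace ℝ E] {γ : ℝ → E} {v : E} {a b k t : ℝ}

lemma hasDerivAt_of_Iic_of_Icc_of_Ici {f : ℝ → E} {c d : ℝ} (hcd : c ≤ d)
    (h_left : t ∈ Iic c → HasDerivWithinAt f v (Iic c) t)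
    (h_mid : t ∈ Icc c d → HasDerivWithinAt f v (Icc c d) t)
    (h_right : t ∈ Ici d → HasDerivWithinAt f v (Ici d) t) : HasDerivAt f v t := by
  have of_isClosed {S : Set ℝ} (hS : IsClosed S) (h : t ∈ S → HasDerivWithinAt f v S t) :
      HasDerivWithinAt f v S t := by
    by_cases ht : t ∈ S
    · exact h ht
    · exact hasDerivWithinAt_iff_hasFDerivWithinAt.2
        (.of_notMem_closure (hS.closure_eq.symm ▸ ht))
  have h_union := ((of_isClosed isClosed_Iic h_left).union
    (of_isClosed isClosed_Icc h_mid)).union (of_isClosed isClosed_Ici h_right)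
  rwa [Iic_union_Icc_eq_Iic hcd, Iic_union_Ici, hasDerivWithinAt_univ] at h_union

lemma hasDerivAt_dilate (w : E) (hk : k ≠ 0) (h : HasDerivAt γ v (a + (t - a) / k)) :
    HasDerivAt (fun u => w + k • (γ (a + (u - a) / k) - w)) v t := by
  have h_comp := (((h.scomp t (hasDerivAt_add_sub_div a k t)).sub_const w).const_smul k).const_add w
  rwa [smul_inv_smul₀ hk] at h_comp

lemma hasDerivAt_dilateLoop (hγ : γ a = γ b) (hab : a ≤ b) (hk : 0 < k)
    (h : HasDerivAt γ v (dilationParam a b k t)) : HasDerivAt (dilateLoop γ a b k) v t := by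
  have h_le : a ≤ b + (k - 1) * (b - a) := by linarith [mul_nonneg hk.le (sub_nonneg.2 hab)]
  refine hasDerivAt_of_Iic_of_Icc_of_Ici h_le (fun ht => ?_) (fun ht => ?_) (fun ht => ?_)
  · rw [dilationParam_of_le hab hk.le ht] at h
    exact h.hasDerivWithinAt.congr_of_mem (fun u hu => dilateLoop_of_le γ hab hk.le hu) ht
  · rw [dilationParam_of_mem_Icc hk ht] at h
    exact (hasDerivAt_dilate (γ a) hk.ne' h).hasDerivWithinAt.congr_of_mem
      (fun u hu => dilateLoop_of_mem_Icc γ hk hu) ht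
  · rw [dilationParam_of_ge hab hk ht] at h
    exact (h.comp_sub_const t _).hasDerivWithinAt.congr_of_mem
      (fun u hu => dilateLoop_of_ge hγ hab hk hu) ht

lemma continuousOn_dilateLoop {s : ℝ} (hγ : ContinuousOn γ (Icc 0 s)) (ha : 0 ≤ a) (hab : a ≤ b)
    (hb : b ≤ s) :
    ContinuousOn (fun q : ℝ × ℝ => dilateLoop γ a b q.1 q.2)
      {q | 1 ≤ q.1 ∧ q.2 ∈ Icc 0 (s + (q.1 - 1) * (b - a))} := by
  have h_ne : {q : ℝ × ℝ | 1 ≤ q.1 ∧ q.2 ∈ Icc 0 (s + (q.1 - 1) * (b - a))} ⊆ {q | q.1 ≠ 0} :=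
    fun q hq => (zero_lt_one.trans_le hq.1).ne'
  have h_path := hγ.comp ((continuousOn_dilationParam a b).mono h_ne)
    fun q hq => mapsTo_dilationParam ha hab hb hq.1 hq.2
  have h_loop := hγ.comp ((continuousOn_loopParam a b).mono h_ne)
    fun q _ => Icc_subset_Icc ha hb (loopParam_mem_Icc hab q.1 q.2)
  exact h_path.add (ContinuousOn.smul (by fun_prop) (h_loop.sub continuousOn_const))

end Calculus

section BoundedCurvature

variable {s a b k κ : ℝ} {γ γ' : ℝ → E2}

lemma IsBCPath.continuousOn (hγ : IsBCPath s γ γ') : ContinuousOn γ (Icc 0 s) :=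
  fun t ht => (hγ.2.1 t ht).continuousAt.continuousWithinAt

lemma IsBCPath.isBCPath_dilateLoop (hγ : IsBCPath s γ γ') (ha : 0 ≤ a) (hab : a ≤ b) (hb : b ≤ s)
    (hloop : γ a = γ b) (hk : 1 ≤ k) :
    IsBCPath (s + (k - 1) * (b - a)) (dilateLoop γ a b k) (γ' ∘ dilationParam a b k) := by
  obtain ⟨hs, h_deriv, h_cont, h_unit, D, hD⟩ := hγ
  have h_maps := mapsTo_dilationParam ha hab hb hk
  have h_growth : 0 ≤ (k - 1) * (b - a) := mul_nonneg (sub_nonneg.2 hk) (sub_nonneg.2 hab)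
  refine ⟨add_nonneg hs h_growth, fun t ht => ?_, ?_, fun t ht => h_unit _ (h_maps ht), ?_⟩
  · exact hasDerivAt_dilateLoop hloop hab (by linarith) (h_deriv _ (h_maps ht))
  · exact h_cont.comp (continuous_dilationParam a b k).continuousOn h_maps
  · refine ⟨{a, b + (k - 1) * (b - a)} ∪
      D.preimage _ (dilationParam_strictMono a b hk).injective.injOn, fun t ht h_notMem => ?_⟩
    simp only [Finset.mem_union, Finset.mem_insert, Finset.mem_singleton, Finset.mem_preimage,
      not_or] at h_notMem
    obtain ⟨⟨hta, htb⟩, htD⟩ := h_notMem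
    obtain ⟨r, ⟨hr₀, hr₁⟩, hr⟩ := exists_hasDerivAt_dilationParam hab hk hta htb
    obtain ⟨v, hv, h_second⟩ := hD _ (h_maps ht) htD
    refine ⟨r • v, ?_, h_second.scomp t hr⟩
    rw [norm_smul, Real.norm_of_nonneg hr₀]
    exact mul_le_one₀ hr₁ (norm_nonneg v) hv

lemma IsBCPath.inGamma_dilateLoop (hγ : IsBCPath s γ γ') (ha : 0 ≤ a) (hab : a ≤ b) (hb : b ≤ s)
    (hloop : γ a = γ b) (hk : 1 ≤ k) :
    InGamma (γ 0) (γ' 0) (γ s) (γ' s) (s + (k - 1) * (b - a))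
      (dilateLoop γ a b k) (γ' ∘ dilationParam a b k) := by
  have hk₀ : 0 < k := by linarith
  refine ⟨hγ.isBCPath_dilateLoop ha hab hb hloop hk, dilateLoop_of_le γ hab hk₀.le ha, ?_, ?_, ?_⟩
  · rw [Function.comp_apply, dilationParam_of_le hab hk₀.le ha]
  · rw [dilateLoop_of_ge hloop hab hk₀ (by linarith), add_sub_cancel_right]
  · rw [Function.comp_apply, dilationParam_add_mul_sub hab hk₀ hb]

lemma IsBCPath.isBCHomotopy_dilateLoop (hγ : IsBCPath s γ γ') (ha : 0 ≤ a) (hab : a ≤ b)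
    (hb : b ≤ s) (hloop : γ a = γ b) (hκ : 0 ≤ κ) :
    IsBCHomotopy (γ 0) (γ' 0) (γ s) (γ' s) (fun p => s + (1 + p * κ - 1) * (b - a))
      (fun p => dilateLoop γ a b (1 + p * κ))
      (fun p => γ' ∘ dilationParam a b (1 + p * κ)) := by
  have h_factor {p : ℝ} (hp : p ∈ Icc (0 : ℝ) 1) : 1 ≤ 1 + p * κ :=
    le_add_of_nonneg_right (mul_nonneg hp.1 hκ)
  refine ⟨fun p hp => hγ.inGamma_dilateLoop ha hab hb hloop (h_factor hp), by fun_prop, ?_⟩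
  refine (continuousOn_dilateLoop hγ.continuousOn ha hab hb).comp
    (f := fun q : ℝ × ℝ => (1 + q.1 * κ, q.2 * (s + (1 + q.1 * κ - 1) * (b - a))))
    (by fun_prop) fun q hq => ?_
  have h_length : 0 ≤ s + (1 + q.1 * κ - 1) * (b - a) :=
    (hγ.isBCPath_dilateLoop ha hab hb hloop (h_factor hq.1)).1
  exact ⟨h_factor hq.1, mul_nonneg hq.2.1 h_length, mul_le_of_le_one_left h_length hq.2.2⟩

lemma IsBCPath.boundedHomotopic_dilateLoop (hγ : IsBCPath s γ γ') (ha : 0 ≤ a) (hab : a ≤ b)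
    (hb : b ≤ s) (hloop : γ a = γ b) (hk : 1 ≤ k) :
    BoundedHomotopic (γ 0) (γ' 0) (γ s) (γ' s) s γ γ' (s + (k - 1) * (b - a))
      (dilateLoop γ a b k) (γ' ∘ dilationParam a b k) := by
  refine ⟨_, _, _, hγ.isBCHomotopy_dilateLoop ha hab hb hloop (sub_nonneg.2 hk), ?_⟩
  simp [EqOn]

end BoundedCurvature

/-- Every bounded curvature path that has a self-intersection
(there are parameters `t₁ < t₂` in its domain with `γ t₁ = γ t₂`) is a free path. -/
theorem self_intersecting_bc_path_is_free (s : ℝ) (γ γ' : ℝ → E2)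
    (hγ : IsBCPath s γ γ')
    (hself : ∃ t₁ ∈ Set.Icc 0 s, ∃ t₂ ∈ Set.Icc 0 s, t₁ < t₂ ∧ γ t₁ = γ t₂) :
    IsFreePath s γ γ' := by
  obtain ⟨a, ⟨ha, -⟩, b, ⟨-, hb⟩, hab, hloop⟩ := hself
  intro L hL
  have h_pos : 0 < b - a := sub_pos.2 hab
  have h_factor : 1 ≤ 1 + L / (b - a) := le_add_of_nonneg_right (div_pos hL h_pos).le
  have h_length : L ≤ s + (1 + L / (b - a) - 1) * (b - a) := by
    rw [add_sub_cancel_left, div_mul_cancel₀ L h_pos.ne']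
    exact le_add_of_nonneg_left hγ.1
  exact ⟨_, _, _, h_length, hγ.boundedHomotopic_dilateLoop ha hab.le hb hloop h_factor⟩
end
end

section
/- Every bounded curvature path having parallel tangents is a free path. -/
noncomputable section

/-!
At the two parameters `t₁ ≤ t₂` where the tangents are opposite, cut the path open and insert a
straight segment of length `l` in the tangent direction.  Neither the unit speed nor the curvature
bound is affected, and since the two segments are opposite vectors, the endpoint does not move.
Letting `l` grow from `0` to any prescribed value is therefore a homotopy within `Γ(x, y)`.
-/

open Set Topology

theorem hasDerivAt_zero_comp_of_lipschitzWith {𝕜 E : Type*} [NontriviallyNormedField 𝕜]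
    [NormedAddCommGroup E] [NormedSpace 𝕜 E] {f : 𝕜 → E} {g : 𝕜 → 𝕜} {K : NNReal} {t : 𝕜}
    (hf : HasDerivAt f 0 (g t)) (hg : LipschitzWith K g) : HasDerivAt (f ∘ g) 0 t := by
  have hg_bigO : (fun u => g u - g t) =O[𝓝 t] fun u => u - t :=
    .of_bound K (.of_forall fun u => hg.norm_sub_le u t)
  rw [hasDerivAt_iff_isLittleO] at hf ⊢
  simp only [smul_zero, sub_zero] at hf ⊢
  exact (hf.comp_tendsto hg.continuous.continuousAt).trans_isBigO hg_bigO

/-- The reading at time `t` of a clock that runs at unit speed, except that it stops for a duration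
`l` when it shows `c` (for `0 ≤ l`). -/
def pausedClock (c l t : ℝ) : ℝ := max (min t c) (t - l)

section PausedClock

variable {c l t : ℝ}

theorem pausedClock_of_le (hl : 0 ≤ l) (ht : t ≤ c) : pausedClock c l t = t := by
  rw [pausedClock, min_eq_left ht, max_eq_left (by linarith)]

theorem pausedClock_of_mem_Icc (ht : t ∈ Icc c (c + l)) : pausedClock c l t = c := by
  rw [pausedClock, min_eq_right ht.1, max_eq_left (by linarith [ht.2])]

theorem pausedClock_of_ge (ht : c + l ≤ t) : pausedClock c l t = t - l :=
  max_eq_right ((min_le_right t c).trans (by linarith))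

@[simp]
theorem pausedClock_zero_duration : pausedClock c 0 t = t := by
  simp [pausedClock]

theorem pausedClock_mem_Icc {s : ℝ} (hc : c ∈ Icc 0 s) (ht : t ∈ Icc 0 (s + l)) :
    pausedClock c l t ∈ Icc 0 s :=
  ⟨le_max_of_le_left (le_min ht.1 hc.1),
    max_le ((min_le_right t c).trans hc.2) (by linarith [ht.2])⟩

theorem lipschitzWith_pausedClock (c l : ℝ) : LipschitzWith 1 (pausedClock c l) := by
  have h_shift : LipschitzWith 1 fun t : ℝ => t - l :=
    LipschitzWith.of_dist_le_mul fun t u => by simp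
  simpa only [max_self, id_eq] using! (LipschitzWith.id.min_const c).max h_shift

theorem hasDerivAt_pausedClock_of_notMem_Icc (hl : 0 ≤ l) (ht : t ∉ Icc c (c + l)) :
    HasDerivAt (pausedClock c l) 1 t := by
  rcases lt_or_ge t c with htc | hct
  · refine (hasDerivAt_id t).congr_of_eventuallyEq ?_
    filter_upwards [Iio_mem_nhds htc] with u hu using pausedClock_of_le hl hu.le
  · have htl : c + l < t := not_le.1 fun h => ht ⟨hct, h⟩
    refine ((hasDerivAt_id t).sub_const l).congr_of_eventuallyEq ?_
    filter_upwards [Ioi_mem_nhds htl] with u hu using pausedClock_of_ge hu.le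

theorem exists_finset_hasDerivAt_comp_pausedClock {E : Type*} [NormedAddCommGroup E]
    [NormedSpace ℝ E] {s K : ℝ} {f : ℝ → E} {D : Finset ℝ} (hK : 0 ≤ K) (hl : 0 ≤ l)
    (hc : c ∈ Icc 0 s)
    (hD : ∀ t ∈ Icc 0 s, t ∉ D → ∃ a : E, ‖a‖ ≤ K ∧ HasDerivAt f a t) :
    ∃ D' : Finset ℝ, ∀ t ∈ Icc 0 (s + l), t ∉ D' →
      ∃ a : E, ‖a‖ ≤ K ∧ HasDerivAt (f ∘ pausedClock c l) a t := by
  refine ⟨{c, c + l} ∪ (D ∪ D.image (· + l)), fun t ht htD => ?_⟩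
  simp only [Finset.mem_union, Finset.mem_insert, Finset.mem_singleton, Finset.mem_image,
    not_or, not_exists, not_and] at htD
  obtain ⟨⟨htc, htcl⟩, htD, htDl⟩ := htD
  by_cases htI : t ∈ Icc c (c + l)
  · refine ⟨0, by rwa [norm_zero], (hasDerivAt_const t (f c)).congr_of_eventuallyEq ?_⟩
    filter_upwards [Icc_mem_nhds (htI.1.lt_of_ne' htc) (htI.2.lt_of_ne htcl)] with u hu
    rw [Function.comp_apply, pausedClock_of_mem_Icc hu]
  · have h_clock_notMem : pausedClock c l t ∉ D := by
      rcases le_total t c with h | h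
      · rwa [pausedClock_of_le hl h]
      · rw [pausedClock_of_ge (not_le.1 fun h' => htI ⟨h, h'⟩).le]
        exact fun h' => htDl _ h' (sub_add_cancel t l)
    obtain ⟨a, ha, hf_deriv⟩ := hD _ (pausedClock_mem_Icc hc ht) h_clock_notMem
    refine ⟨a, ha, ?_⟩
    simpa using hf_deriv.scomp t (hasDerivAt_pausedClock_of_notMem_Icc hl htI)

end PausedClock

section InsertSegment

variable {E : Type*} [NormedAddCommGroup E] [NormedSpace ℝ E]

/-- The path that follows `f` up to time `c`, then the straight segment of length `l` in the unit
direction `v`, and then the translate of the rest of `f`.  Here `t - pausedClock c l t` is the part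
of the segment covered by time `t`. -/
def insertSegment (c l : ℝ) (f : ℝ → E) (v : E) (t : ℝ) : E :=
  f (pausedClock c l t) + (t - pausedClock c l t) • v

@[simp]
theorem insertSegment_zero_length (c : ℝ) (f : ℝ → E) (v : E) : insertSegment c 0 f v = f := by
  ext t
  simp [insertSegment]

theorem insertSegment_of_le {c l t : ℝ} (hl : 0 ≤ l) (ht : t ≤ c) (f : ℝ → E) (v : E) :
    insertSegment c l f v t = f t := by
  simp [insertSegment, pausedClock_of_le hl ht]

theorem insertSegment_of_ge {c l t : ℝ} (ht : c + l ≤ t) (f : ℝ → E) (v : E) :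
    insertSegment c l f v t = f (t - l) + l • v := by
  simp [insertSegment, pausedClock_of_ge ht]

theorem hasDerivAt_insertSegment {c l t : ℝ} {f f' : ℝ → E} (hl : 0 ≤ l)
    (hf : HasDerivAt f (f' (pausedClock c l t)) (pausedClock c l t)) :
    HasDerivAt (insertSegment c l f (f' c)) (f' (pausedClock c l t)) t := by
  by_cases ht : t ∈ Icc c (c + l)
  · -- The clock need not be differentiable here, but `f` minus its tangent line at `c` has zero
    -- derivative at `c`, and this survives composition with the Lipschitz clock.
    have hclock : pausedClock c l t = c := pausedClock_of_mem_Icc ht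
    have h_deviation : HasDerivAt (fun u => f u - u • f' c) 0 (pausedClock c l t) := by
      simpa [hclock] using hf.fun_sub ((hasDerivAt_id' (pausedClock c l t)).smul_const (f' c))
    have h_sum := (hasDerivAt_zero_comp_of_lipschitzWith h_deviation
      (lipschitzWith_pausedClock c l)).add ((hasDerivAt_id t).smul_const (f' c))
    rw [hclock]
    convert h_sum using 1
    · ext u
      simp only [insertSegment, Pi.add_apply, Function.comp_apply, id_eq]
      module
    · simp
  · have hclock := hasDerivAt_pausedClock_of_notMem_Icc hl ht
    simpa using! (hf.scomp t hclock).add (((hasDerivAt_id' t).fun_sub hclock).smul_const (f' c))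

theorem continuousOn_insertSegment {X : Type*} [TopologicalSpace X] {S : Set X} {s l : X → ℝ}
    {f : X → ℝ → E} {c : ℝ} {v : E} (hc : ∀ p ∈ S, c ∈ Icc 0 (s p)) (hl : Continuous l)
    (hf : ContinuousOn (fun q : X × ℝ => f q.1 q.2) {q | q.1 ∈ S ∧ q.2 ∈ Icc 0 (s q.1)}) :
    ContinuousOn (fun q : X × ℝ => insertSegment c (l q.1) (f q.1) v q.2)
      {q | q.1 ∈ S ∧ q.2 ∈ Icc 0 (s q.1 + l q.1)} := by
  have h_clock : Continuous fun q : X × ℝ => pausedClock c (l q.1) q.2 := by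
    unfold pausedClock
    fun_prop
  refine .add (hf.comp (continuous_fst.prodMk h_clock).continuousOn fun q hq => ?_)
    (Continuous.continuousOn (by fun_prop))
  exact ⟨hq.1, pausedClock_mem_Icc (hc q.1 hq.1) hq.2⟩

/-- The path `f` with a segment of length `l` inserted at each of the parameters `t₁ ≤ t₂`, in the
respective tangent directions.  The later segment is inserted first, so that `t₁` is still the right
parameter for the earlier one. -/
def stretch (t₁ t₂ : ℝ) (f f' : ℝ → E) (l : ℝ) : ℝ → E :=
  insertSegment t₁ l (insertSegment t₂ l f (f' t₂)) (f' t₁)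

variable {t₁ t₂ : ℝ} {f f' : ℝ → E}

@[simp]
theorem stretch_zero : stretch t₁ t₂ f f' 0 = f := by
  simp [stretch]

theorem continuousOn_stretch {s : ℝ} (hf : ContinuousOn f (Icc 0 s)) (ht₁ : 0 ≤ t₁) (ht₁₂ : t₁ ≤ t₂)
    (ht₂ : t₂ ≤ s) :
    ContinuousOn (fun q : ℝ × ℝ => stretch t₁ t₂ f f' q.1 q.2)
      {q | q.1 ∈ Ici 0 ∧ q.2 ∈ Icc 0 (s + q.1 + q.1)} := by
  have hf_family : ContinuousOn (fun q : ℝ × ℝ => f q.2) {q | q.1 ∈ Ici 0 ∧ q.2 ∈ Icc 0 s} :=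
    hf.comp continuousOn_snd fun q hq => hq.2
  have h_once : ContinuousOn (fun q : ℝ × ℝ => insertSegment t₂ q.1 f (f' t₂) q.2)
      {q | q.1 ∈ Ici 0 ∧ q.2 ∈ Icc 0 (s + q.1)} :=
    continuousOn_insertSegment (l := id) (f := fun _ => f) (fun _ _ => ⟨ht₁.trans ht₁₂, ht₂⟩)
      continuous_id hf_family
  have ht₁_mem (p : ℝ) (hp : p ∈ Ici 0) : t₁ ∈ Icc 0 (s + p) :=
    ⟨ht₁, (ht₁₂.trans ht₂).trans (le_add_of_nonneg_right hp)⟩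
  exact continuousOn_insertSegment (l := id) (f := fun l => insertSegment t₂ l f (f' t₂)) ht₁_mem
    continuous_id h_once

end InsertSegment

section BoundedCurvature

variable {s c l t₁ t₂ : ℝ} {γ γ' : ℝ → E2}

theorem IsBCPath.insertSegment (hγ : IsBCPath s γ γ') (hl : 0 ≤ l) (hc : c ∈ Icc 0 s) :
    IsBCPath (s + l) (insertSegment c l γ (γ' c)) (γ' ∘ pausedClock c l) := by
  obtain ⟨hs, h_deriv, h_cont, h_norm, D, hD⟩ := hγ
  have h_maps : MapsTo (pausedClock c l) (Icc 0 (s + l)) (Icc 0 s) :=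
    fun t ht => pausedClock_mem_Icc hc ht
  exact ⟨add_nonneg hs hl, fun t ht => hasDerivAt_insertSegment hl (h_deriv _ (h_maps ht)),
    h_cont.comp (lipschitzWith_pausedClock c l).continuous.continuousOn h_maps,
    fun t ht => h_norm _ (h_maps ht),
    exists_finset_hasDerivAt_comp_pausedClock zero_le_one hl hc hD⟩

theorem InGamma.insertSegment {x X y Y : E2} (hγ : InGamma x X y Y s γ γ') (hl : 0 ≤ l)
    (hc : c ∈ Icc 0 s) :
    InGamma x X (y + l • γ' c) Y (s + l) (insertSegment c l γ (γ' c)) (γ' ∘ pausedClock c l) := by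
  obtain ⟨h_path, h_start, h_startVel, h_end, h_endVel⟩ := hγ
  have hcs : c + l ≤ s + l := by linarith [hc.2]
  refine ⟨h_path.insertSegment hl hc, ?_, ?_, ?_, ?_⟩
  · rw [insertSegment_of_le hl hc.1, h_start]
  · rw [Function.comp_apply, pausedClock_of_le hl hc.1, h_startVel]
  · rw [insertSegment_of_ge hcs, add_sub_cancel_right, h_end]
  · rw [Function.comp_apply, pausedClock_of_ge hcs, add_sub_cancel_right, h_endVel]

/-- The velocity of `stretch t₁ t₂ γ γ' l`, for `t₁ ≤ t₂` and `0 ≤ l`: that of `γ`, read off a clock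
which pauses at `t₁` and at `t₂`. -/
def stretchVelocity {E : Type*} (t₁ t₂ : ℝ) (γ' : ℝ → E) (l : ℝ) : ℝ → E :=
  (γ' ∘ pausedClock t₂ l) ∘ pausedClock t₁ l

@[simp]
theorem stretchVelocity_zero {E : Type*} {γ' : ℝ → E} : stretchVelocity t₁ t₂ γ' 0 = γ' := by
  ext1 t
  simp [stretchVelocity]

theorem IsBCPath.inGamma_stretch (hγ : IsBCPath s γ γ') (hl : 0 ≤ l) (ht₁ : 0 ≤ t₁)
    (ht₁₂ : t₁ ≤ t₂) (ht₂ : t₂ ≤ s) (hpar : γ' t₂ = -γ' t₁) :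
    InGamma (γ 0) (γ' 0) (γ s) (γ' s) (s + l + l)
      (stretch t₁ t₂ γ γ' l) (stretchVelocity t₁ t₂ γ' l) := by
  have hγ_self : InGamma (γ 0) (γ' 0) (γ s) (γ' s) s γ γ' := ⟨hγ, rfl, rfl, rfl, rfl⟩
  have h_twice := (hγ_self.insertSegment hl ⟨ht₁.trans ht₁₂, ht₂⟩).insertSegment (c := t₁) hl
    ⟨ht₁, by linarith⟩
  have h_tangent : (γ' ∘ pausedClock t₂ l) t₁ = γ' t₁ := by
    rw [Function.comp_apply, pausedClock_of_le hl ht₁₂]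
  have h_cancel : γ s + l • γ' t₂ + l • γ' t₁ = γ s := by
    rw [hpar]
    module
  rwa [h_tangent, h_cancel] at h_twice

theorem IsBCPath.isBCHomotopy_stretch (hγ : IsBCPath s γ γ') (hl : 0 ≤ l) (ht₁ : 0 ≤ t₁)
    (ht₁₂ : t₁ ≤ t₂) (ht₂ : t₂ ≤ s) (hpar : γ' t₂ = -γ' t₁) :
    IsBCHomotopy (γ 0) (γ' 0) (γ s) (γ' s) (fun p => s + p * l + p * l)
      (fun p => stretch t₁ t₂ γ γ' (p * l)) (fun p => stretchVelocity t₁ t₂ γ' (p * l)) := by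
  have h_pos (p : ℝ) (hp : p ∈ Icc (0 : ℝ) 1) : 0 ≤ p * l := mul_nonneg hp.1 hl
  refine ⟨fun p hp => hγ.inGamma_stretch (h_pos p hp) ht₁ ht₁₂ ht₂ hpar, by fun_prop, ?_⟩
  have hγ_cont : ContinuousOn γ (Icc 0 s) := HasDerivAt.continuousOn hγ.2.1
  refine (continuousOn_stretch hγ_cont ht₁ ht₁₂ ht₂).comp
    (f := fun q : ℝ × ℝ => (q.1 * l, q.2 * (s + q.1 * l + q.1 * l))) (by fun_prop) ?_
  rintro ⟨p, u⟩ ⟨hp, hu⟩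
  have h_length : 0 ≤ s + p * l + p * l := by linarith [hγ.1, h_pos p hp]
  exact ⟨h_pos p hp, mul_nonneg hu.1 h_length, mul_le_of_le_one_left h_length hu.2⟩

end BoundedCurvature

/-- Every bounded curvature path having parallel tangents
(two parameters `t₁ < t₂` with `γ' t₂ = -γ' t₁`) is a free path. -/
theorem bc_path_with_parallel_tangents_is_free (s : ℝ) (γ γ' : ℝ → E2)
    (hγ : IsBCPath s γ γ')
    (hpar : ∃ t₁ ∈ Set.Icc 0 s, ∃ t₂ ∈ Set.Icc 0 s, t₁ < t₂ ∧ γ' t₂ = -γ' t₁) :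
    IsFreePath s γ γ' := by
  obtain ⟨t₁, ⟨ht₁, -⟩, t₂, ⟨-, ht₂⟩, ht₁₂, hpar⟩ := hpar
  intro L hL
  refine ⟨s + L + L, stretch t₁ t₂ γ γ' L, stretchVelocity t₁ t₂ γ' L, by linarith [hγ.1],
    fun p => s + p * L + p * L, fun p => stretch t₁ t₂ γ γ' (p * L),
    fun p => stretchVelocity t₁ t₂ γ' (p * L),
    hγ.isBCHomotopy_stretch hL.le ht₁ ht₁₂.le ht₂ hpar, ?_⟩
  simp [eqOn_refl]
end
end

section
/- Let 𝔻 be a closed disk of radius 1 in ℝ². If a bounded curvature path γ : [0, s] → ℝ² has its image contained in 𝔻 and there exists an interior parameter p ∈ (0, s) with γ(p) on the boundary circle ∂𝔻, then γ(t) ∈ ∂𝔻 for every t ∈ [0, s], i.e., the path lies entirely in the boundary circle. -/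
noncomputable section

/-!
Let `f t = ‖γ t - o‖ ^ 2`. Where `γ` is twice differentiable,
`f'' = 2 * (‖γ'‖ ^ 2 + ⟪γ - o, γ''⟫)`, and the second term is at least `-1` since
`‖γ - o‖ ≤ 1` and `‖γ''‖ ≤ 1`. At unit speed `f'' ≥ 0`, so `f` is convex; a convex function
attaining its maximum at an interior point is constant.
-/

open Set Filter Topology

section CountableExceptions

variable {f f' f'' : ℝ → ℝ} {I C : Set ℝ}

theorem eventually_nhdsGT_lt_of_hasDerivAt_pos {d x : ℝ} (hd : 0 < d) (hf : HasDerivAt f d x) :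
    ∀ᶠ y in 𝓝[>] x, f x < f y := by
  have hslope : Tendsto (slope f x) (𝓝[>] x) (𝓝 d) :=
    (hasDerivWithinAt_iff_tendsto_slope' self_notMem_Ioi).1 hf.hasDerivWithinAt
  filter_upwards [hslope.eventually_const_lt hd, self_mem_nhdsWithin] with y hy hxy
  exact (slope_pos_iff_of_le (le_of_lt hxy)).1 hy

/-- If `f b < f a`, some level `y` strictly between them is not taken on the countable set `C`.
At the last point where `f` takes the value `y` the derivative is positive, so `f` exceeds `y`
just after it and must cross `y` again to reach `f b`. -/
theorem le_of_hasDerivAt_pos_off_countable {a b : ℝ} (hab : a ≤ b) (hC : C.Countable)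
    (hf : ContinuousOn f (Icc a b)) (hf' : ∀ x ∈ Ioo a b \ C, HasDerivAt f (f' x) x)
    (hpos : ∀ x ∈ Ioo a b \ C, 0 < f' x) : f a ≤ f b := by
  by_contra! hlt
  obtain ⟨y, hyC, hby, hya⟩ := ((hC.image f).dense_compl ℝ).exists_between hlt
  have hlevel_compact : IsCompact (Icc a b ∩ f ⁻¹' {y}) :=
    isCompact_Icc.of_isClosed_subset
      (hf.preimage_isClosed_of_isClosed isClosed_Icc isClosed_singleton) inter_subset_left
  have hlevel_nonempty : (Icc a b ∩ f ⁻¹' {y}).Nonempty :=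
    intermediate_value_Icc' hab hf ⟨hby.le, hya.le⟩
  obtain ⟨c, ⟨hc, rfl⟩, hc_last⟩ := hlevel_compact.exists_isGreatest hlevel_nonempty
  have hac : a < c := hc.1.lt_of_ne (by rintro rfl; exact hya.false)
  have hcb : c < b := hc.2.lt_of_ne (by rintro rfl; exact hby.false)
  have hc_reg : c ∈ Ioo a b \ C := ⟨⟨hac, hcb⟩, fun h ↦ hyC (mem_image_of_mem f h)⟩
  obtain ⟨x, hfx, hcx, hxb⟩ :=
    ((eventually_nhdsGT_lt_of_hasDerivAt_pos (hpos c hc_reg) (hf' c hc_reg)).and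
      (Ioo_mem_nhdsGT hcb)).exists
  have hsub : Icc x b ⊆ Icc a b := Icc_subset_Icc_left (hac.trans hcx).le
  obtain ⟨z, hz, hfz⟩ := intermediate_value_Icc' hxb.le (hf.mono hsub) ⟨hby.le, hfx.le⟩
  exact (hcx.trans_le hz.1).not_ge (hc_last ⟨hsub hz, hfz⟩)

theorem monotoneOn_of_hasDerivAt_nonneg_off_countable (hI : Convex ℝ I) (hC : C.Countable)
    (hf : ContinuousOn f I) (hf' : ∀ x ∈ interior I \ C, HasDerivAt f (f' x) x)
    (hnonneg : ∀ x ∈ interior I \ C, 0 ≤ f' x) : MonotoneOn f I := by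
  intro a ha b hb hab
  have hsub : Icc a b ⊆ I := hI.ordConnected.out ha hb
  have hreg : Ioo a b \ C ⊆ interior I \ C :=
    sdiff_subset_sdiff_left (interior_Icc (a := a) (b := b) ▸ interior_mono hsub)
  have hperturbed : ∀ ε > 0, f a + ε * a ≤ f b + ε * b := fun ε hε ↦
    le_of_hasDerivAt_pos_off_countable (f := fun x ↦ f x + ε * x) (f' := fun x ↦ f' x + ε * 1)
      hab hC ((hf.mono hsub).add (by fun_prop))
      (fun x hx ↦ (hf' x (hreg hx)).add ((hasDerivAt_id x).const_mul ε))
      (fun x hx ↦ by linarith [hnonneg x (hreg hx)])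
  have hlim (x : ℝ) : Tendsto (fun ε ↦ f x + ε * x) (𝓝[>] 0) (𝓝 (f x)) :=
    tendsto_nhdsWithin_of_tendsto_nhds <| Continuous.tendsto' (by fun_prop) _ _ (by simp)
  exact le_of_tendsto_of_tendsto (hlim a) (hlim b)
    (eventually_nhdsWithin_of_forall hperturbed)

theorem convexOn_of_hasDerivAt2_nonneg_off_countable (hI : Convex ℝ I) (hC : C.Countable)
    (hf : ContinuousOn f I) (hf' : ∀ x ∈ interior I, HasDerivAt f (f' x) x)
    (hf'_cont : ContinuousOn f' (interior I))
    (hf'' : ∀ x ∈ interior I \ C, HasDerivAt f' (f'' x) x)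
    (hnonneg : ∀ x ∈ interior I \ C, 0 ≤ f'' x) : ConvexOn ℝ I f := by
  have hmono : MonotoneOn f' (interior I) :=
    monotoneOn_of_hasDerivAt_nonneg_off_countable hI.interior hC hf'_cont
      (by rwa [interior_interior]) (by rwa [interior_interior])
  exact MonotoneOn.convexOn_of_deriv hI hf
    (fun x hx ↦ (hf' x hx).differentiableAt.differentiableWithinAt)
    (hmono.congr fun x hx ↦ (hf' x hx).deriv.symm)

end CountableExceptions

section MaximumPrinciple

variable {E : Type*} [AddCommGroup E] [Module ℝ E] [TopologicalSpace E] [ContinuousAdd E]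
  [ContinuousSMul ℝ E] {s : Set E} {x : E}

theorem exists_mem_openSegment_of_mem_interior (hx : x ∈ interior s) (y : E) :
    ∃ z ∈ s, x ∈ openSegment ℝ y z := by
  have hlim : Tendsto (fun r : ℝ ↦ (1 + r) • x + (-r) • y) (𝓝[>] 0) (𝓝 x) :=
    tendsto_nhdsWithin_of_tendsto_nhds <| Continuous.tendsto' (by fun_prop) _ _ (by simp)
  obtain ⟨r, hzs, hr : 0 < r⟩ :=
    ((hlim.eventually_mem (mem_interior_iff_mem_nhds.1 hx)).and self_mem_nhdsWithin).exists
  refine ⟨_, hzs, r / (1 + r), 1 / (1 + r), by positivity, by positivity, by field_simp; ring, ?_⟩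
  match_scalars <;> field_simp
  ring

theorem eq_of_convexOn_of_isMaxOn_interior {β : Type*} [AddCommMonoid β] [LinearOrder β]
    [IsOrderedCancelAddMonoid β] [Module ℝ β] [PosSMulStrictMono ℝ β] {f : E → β} {y : E}
    (hf : ConvexOn ℝ s f) (hx : x ∈ interior s) (hmax : IsMaxOn f s x) (hy : y ∈ s) :
    f y = f x := by
  obtain ⟨z, hz, hxyz⟩ := exists_mem_openSegment_of_mem_interior hx y
  refine (hmax hy).antisymm (le_of_not_gt fun hlt ↦ ?_)
  exact (hf.lt_right_of_left_lt hy hz hxyz hlt).not_ge (hmax hz)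

end MaximumPrinciple

section Curves

variable {E : Type*} [NormedAddCommGroup E] [InnerProductSpace ℝ E] {γ γ' γ'' : ℝ → E}
  {I C : Set ℝ} {o : E}

theorem convexOn_norm_sub_sq_of_norm_mul_le (hI : Convex ℝ I) (hC : C.Countable)
    (hγ : ContinuousOn γ I) (hγ' : ∀ t ∈ interior I, HasDerivAt γ (γ' t) t)
    (hγ'_cont : ContinuousOn γ' (interior I))
    (hγ'' : ∀ t ∈ interior I \ C, HasDerivAt γ' (γ'' t) t)
    (hle : ∀ t ∈ interior I \ C, ‖γ t - o‖ * ‖γ'' t‖ ≤ ‖γ' t‖ ^ 2) :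
    ConvexOn ℝ I (fun t ↦ ‖γ t - o‖ ^ 2) := by
  have hsub : ∀ t ∈ interior I, HasDerivAt (fun t ↦ γ t - o) (γ' t) t :=
    fun t ht ↦ (hγ' t ht).sub_const o
  have hsub_cont : ContinuousOn (fun t ↦ γ t - o) I := hγ.sub continuousOn_const
  refine convexOn_of_hasDerivAt2_nonneg_off_countable hI hC (hsub_cont.norm.pow 2)
    (fun t ht ↦ (hsub t ht).norm_sq)
    (((hsub_cont.mono interior_subset).inner hγ'_cont).const_mul 2)
    (fun t ht ↦ ((hsub t ht.1).inner ℝ (hγ'' t ht)).const_mul 2) fun t ht ↦ ?_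
  have hcauchy : -(‖γ t - o‖ * ‖γ'' t‖) ≤ inner ℝ (γ t - o) (γ'' t) :=
    neg_le_of_abs_le (abs_real_inner_le_norm _ _)
  rw [real_inner_self_eq_norm_sq]
  linarith [hle t ht]

/-- At unit speed the hypothesis `hcurv` says that the curvature is at most `1 / R`. -/
theorem bc_path_in_unit_disk_touching_boundary_lies_on_boundary_general {R p : ℝ}
    (hI : Convex ℝ I) (hC : C.Countable)
    (hγ : ContinuousOn γ I) (hγ' : ∀ t ∈ interior I, HasDerivAt γ (γ' t) t)
    (hγ'_cont : ContinuousOn γ' (interior I))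
    (hγ'' : ∀ t ∈ interior I \ C, HasDerivAt γ' (γ'' t) t)
    (hcurv : ∀ t ∈ interior I \ C, R * ‖γ'' t‖ ≤ ‖γ' t‖ ^ 2)
    (himg : ∀ t ∈ I, γ t ∈ Metric.closedBall o R)
    (hp : p ∈ interior I) (hpb : γ p ∈ Metric.sphere o R) :
    ∀ t ∈ I, γ t ∈ Metric.sphere o R := by
  simp only [mem_closedBall_iff_norm, mem_sphere_iff_norm] at himg hpb ⊢
  have hconvex : ConvexOn ℝ I (fun t ↦ ‖γ t - o‖ ^ 2) :=
    convexOn_norm_sub_sq_of_norm_mul_le hI hC hγ hγ' hγ'_cont hγ'' fun t ht ↦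
      (mul_le_mul_of_nonneg_right (himg t (interior_subset ht.1)) (norm_nonneg _)).trans
        (hcurv t ht)
  have hmax : IsMaxOn (fun t ↦ ‖γ t - o‖ ^ 2) I p := fun t ht ↦
    pow_le_pow_left₀ (norm_nonneg _) ((himg t ht).trans_eq hpb.symm) 2
  intro t ht
  have hsq : ‖γ t - o‖ ^ 2 = ‖γ p - o‖ ^ 2 :=
    eq_of_convexOn_of_isMaxOn_interior hconvex hp hmax ht
  exact ((sq_eq_sq₀ (norm_nonneg _) (norm_nonneg _)).1 hsq).trans hpb

end Curves

/-- If a bounded curvature path has image contained in a closed unit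
disk `𝔻` and touches the boundary circle `∂𝔻` at some interior parameter, then it lies
entirely in `∂𝔻`. -/
theorem bc_path_in_unit_disk_touching_boundary_lies_on_boundary
    (s : ℝ) (γ γ' : ℝ → E2) (o : E2)
    (hγ : IsBCPath s γ γ')
    (himg : ∀ t ∈ Set.Icc 0 s, γ t ∈ Metric.closedBall o 1)
    (p : ℝ) (hp : p ∈ Set.Ioo 0 s) (hpb : γ p ∈ Metric.sphere o 1) :
    ∀ t ∈ Set.Icc 0 s, γ t ∈ Metric.sphere o 1 := by
  obtain ⟨_, hderiv, hcont, hunit, D, hD⟩ := hγ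
  choose! γ'' hnorm hderiv2 using hD
  have hsub : interior (Icc 0 s) ⊆ Icc 0 s := interior_subset
  exact bc_path_in_unit_disk_touching_boundary_lies_on_boundary_general (convex_Icc 0 s)
    D.countable_toSet (fun t ht ↦ (hderiv t ht).continuousAt.continuousWithinAt)
    (fun t ht ↦ hderiv t (hsub ht)) (hcont.mono hsub)
    (fun t ht ↦ hderiv2 t (hsub ht.1) ht.2)
    (fun t ht ↦ by simpa [hunit t (hsub ht.1)] using hnorm t (hsub ht.1) ht.2)
    himg (interior_Icc (a := (0 : ℝ)) ▸ hp) hpb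
end
end

section
/- Let a₁, a₂, b₁, b₂, c₁, c₂ be points of ℝ² with dist(a₁, a₂) = 2, dist(b₁, b₂) = 2, dist(a₁, b₁) < 4 and dist(a₂, b₂) < 4. Suppose dist(c₁, a₁) = dist(c₁, b₁) = 2 and dist(c₂, a₂) = dist(c₂, b₂) = 2 (so the unit circle about c₁ is externally tangent to the unit circles about a₁ and b₁, and the unit circle about c₂ is externally tangent to the unit circles about a₂ and b₂), and suppose c₁ and c₂ lie in the interior of the convex hull of {a₁, a₂, b₁, b₂}. Then dist(c₁, c₂) < 2; that is, the two closed unit disks centered at c₁ and c₂ have intersecting interiors. -/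
noncomputable section

/-!
Assume that `w = c₂ - c₁` is at least as long as the arms of the linkages `c₁a₁a₂c₂` and `c₁b₁b₂c₂`.
A point interior to a convex hull has a vertex strictly on each side of every line through it.
For the perpendiculars to `w` at `c₁` and `c₂`, this forces one arm at `c₁`, say `c₁a₁`, to lean
away from `c₂`, and one arm at `c₂` to lean away from `c₁`. The coupler `a₁a₂` is too short for the
latter to be `c₂a₂`, so it is `c₂b₂`. A linkage with an arm leaning outwards stays on one side of
the line `c₁c₂`. If both linkages are on the same side, this line contradicts the interior
condition. Otherwise `c₁` has a vertex beyond the line `c₁a₁` only if `c₂b₂` is steeper than `c₁a₁`,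
and `c₂` has a vertex beyond the line `c₂b₂` only if `c₁a₁` is steeper than `c₂b₂`.
-/

open Module
open scoped RealInnerProductSpace EuclideanSpace

lemma exists_lt_apply_of_mem_interior_convexHull {E : Type*} [NormedAddCommGroup E]
    [NormedSpace ℝ E] {s : Set E} {z : E} (hz : z ∈ interior (convexHull ℝ s))
    {f : E →L[ℝ] ℝ} (hf : f ≠ 0) : ∃ x ∈ s, f z < f x := by
  by_contra! hs
  have hull_le : convexHull ℝ s ⊆ {x | f x ≤ f z} :=
    convexHull_min hs (convex_halfSpace_le f.isLinear _)
  have z_max : IsLocalMax f z :=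
    Filter.mem_of_superset (mem_interior_iff_mem_nhds.1 hz) hull_le
  exact hf (z_max.hasFDerivAt_eq_zero f.hasFDerivAt)

/-- A four-bar linkage `c₁ — a₁ — a₂ — c₂`: arms `c₁a₁` and `c₂a₂` of length `r`, a coupler `a₁a₂`
of length at most `r`, and pivots `c₁`, `c₂` at distance at least `r`. In the application the
vertices are centers of successively tangent unit circles and `r = 2`; the last condition is the
one to be refuted. -/
structure IsLinkage {P : Type*} [Dist P] (r : ℝ) (c₁ a₁ a₂ c₂ : P) : Prop where
  dist_left : dist c₁ a₁ = r
  dist_right : dist c₂ a₂ = r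
  dist_coupler_le : dist a₁ a₂ ≤ r
  le_dist_pivots : r ≤ dist c₁ c₂

lemma IsLinkage.reverse {P : Type*} [PseudoMetricSpace P] {r : ℝ} {c₁ a₁ a₂ c₂ : P}
    (h : IsLinkage r c₁ a₁ a₂ c₂) : IsLinkage r c₂ a₂ a₁ c₁ where
  dist_left := h.dist_right
  dist_right := h.dist_left
  dist_coupler_le := dist_comm a₁ a₂ ▸ h.dist_coupler_le
  le_dist_pivots := dist_comm c₁ c₂ ▸ h.le_dist_pivots

lemma IsLinkage.left_eq_of_pivots_eq {P : Type*} [MetricSpace P] {r : ℝ} {c a₁ a₂ : P}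
    (h : IsLinkage r c a₁ a₂ c) : c = a₁ :=
  dist_le_zero.1 (h.dist_left.trans_le (h.le_dist_pivots.trans_eq (dist_self c)))

lemma IsLinkage.norm_left {E : Type*} [SeminormedAddCommGroup E] {r : ℝ} {c₁ a₁ a₂ c₂ : E}
    (h : IsLinkage r c₁ a₁ a₂ c₂) : ‖a₁ - c₁‖ = r := by
  rw [← dist_eq_norm', h.dist_left]

lemma IsLinkage.le_norm_pivots {E : Type*} [SeminormedAddCommGroup E] {r : ℝ} {c₁ a₁ a₂ c₂ : E}
    (h : IsLinkage r c₁ a₁ a₂ c₂) : r ≤ ‖c₂ - c₁‖ := by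
  rw [← dist_eq_norm']
  exact h.le_dist_pivots

section InnerProduct

variable {V : Type*} [NormedAddCommGroup V] [InnerProductSpace ℝ V]

lemma exists_inner_sub_pos_of_mem_interior_convexHull {s : Set V} {z n : V}
    (hz : z ∈ interior (convexHull ℝ s)) (hn : n ≠ 0) : ∃ x ∈ s, 0 < ⟪n, x - z⟫ := by
  have functional_ne : innerSL ℝ n ≠ 0 := fun h ↦ hn (by simpa using congrArg (· n) h)
  obtain ⟨x, hx, hlt⟩ := exists_lt_apply_of_mem_interior_convexHull hz functional_ne
  exact ⟨x, hx, by simpa [inner_sub_right] using hlt⟩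

lemma inner_le_norm_sq_of_norm_le {w x : V} (h : ‖x‖ ≤ ‖w‖) : ⟪w, x⟫ ≤ ‖w‖ ^ 2 :=
  calc ⟪w, x⟫ ≤ ‖w‖ * ‖x‖ := real_inner_le_norm w x
    _ ≤ ‖w‖ ^ 2 := by rw [sq]; gcongr

lemma norm_sq_le_two_mul_inner_of_norm_sub_le {x u : V} (h : ‖x - u‖ ≤ ‖u‖) :
    ‖x‖ ^ 2 ≤ 2 * ⟪x, u⟫ := by
  have expand := norm_sub_sq_real x u
  have sq_le : ‖x - u‖ ^ 2 ≤ ‖u‖ ^ 2 := by gcongr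
  linarith

namespace IsLinkage

variable {r : ℝ} {c₁ a₁ a₂ c₂ : V}

lemma inner_diagonal_nonneg (h : IsLinkage r c₁ a₁ a₂ c₂) :
    0 ≤ ⟪c₂ - c₁, a₂ - c₁⟫ := by
  have arm_le : ⟪c₂ - c₁, c₂ - a₂⟫ ≤ ‖c₂ - c₁‖ ^ 2 := inner_le_norm_sq_of_norm_le <| by
    rw [norm_sub_rev c₂ a₂, h.reverse.norm_left]
    exact h.le_norm_pivots
  have split : a₂ - c₁ = (c₂ - c₁) - (c₂ - a₂) := by abel
  rw [split, inner_sub_right, real_inner_self_eq_norm_sq]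
  linarith

lemma inner_right_le_inner_left (h : IsLinkage r c₁ a₁ a₂ c₂) :
    ⟪c₂ - c₁, a₂ - c₂⟫ ≤ ⟪c₂ - c₁, a₁ - c₁⟫ := by
  have coupler_le : ⟪c₂ - c₁, a₂ - a₁⟫ ≤ ‖c₂ - c₁‖ ^ 2 := inner_le_norm_sq_of_norm_le <| by
    rw [← dist_eq_norm']
    exact h.dist_coupler_le.trans h.le_norm_pivots
  have split : a₂ - c₂ = (a₁ - c₁) + (a₂ - a₁) - (c₂ - c₁) := by abel
  rw [split, inner_sub_right, inner_add_right, real_inner_self_eq_norm_sq]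
  linarith

lemma not_inner_right_neg_of_inner_left_neg (h : IsLinkage r c₁ a₁ a₂ c₂)
    (h_left : ⟪c₂ - c₁, a₁ - c₁⟫ < 0) : ¬ ⟪c₁ - c₂, a₂ - c₂⟫ < 0 := by
  have := h.inner_right_le_inner_left
  rw [← neg_sub c₂ c₁, inner_neg_left]
  linarith

end IsLinkage

lemma IsLinkage.pivots_ne_of_mem_interior [Nontrivial V] {r s : ℝ} {a₁ a₂ b₁ b₂ c₁ c₂ : V}
    (ha : IsLinkage r c₁ a₁ a₂ c₂) (hb : IsLinkage s c₁ b₁ b₂ c₂)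
    (hc₁ : c₁ ∈ interior (convexHull ℝ {a₁, a₂, b₁, b₂})) : c₁ ≠ c₂ := by
  rintro rfl
  have ha₁ : c₁ = a₁ := ha.left_eq_of_pivots_eq
  have ha₂ : c₁ = a₂ := ha.reverse.left_eq_of_pivots_eq
  have hb₁ : c₁ = b₁ := hb.left_eq_of_pivots_eq
  have hb₂ : c₁ = b₂ := hb.reverse.left_eq_of_pivots_eq
  simp [← ha₁, ← ha₂, ← hb₁, ← hb₂] at hc₁

lemma IsLinkage.inner_left_neg_or_inner_left_neg {r s : ℝ} {a₁ a₂ b₁ b₂ c₁ c₂ : V}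
    (ha : IsLinkage r c₁ a₁ a₂ c₂) (hb : IsLinkage s c₁ b₁ b₂ c₂) (hne : c₁ ≠ c₂)
    (hc₁ : c₁ ∈ interior (convexHull ℝ {a₁, a₂, b₁, b₂})) :
    ⟪c₂ - c₁, a₁ - c₁⟫ < 0 ∨ ⟪c₂ - c₁, b₁ - c₁⟫ < 0 := by
  obtain ⟨x, hx, hpos⟩ :=
    exists_inner_sub_pos_of_mem_interior_convexHull hc₁ (neg_ne_zero.2 (sub_ne_zero.2 hne.symm))
  rw [inner_neg_left, neg_pos] at hpos
  rcases hx with rfl | rfl | rfl | rfl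
  · exact .inl hpos
  · exact absurd hpos ha.inner_diagonal_nonneg.not_gt
  · exact .inr hpos
  · exact absurd hpos hb.inner_diagonal_nonneg.not_gt

end InnerProduct

section Plane

variable {V : Type*} [NormedAddCommGroup V] [InnerProductSpace ℝ V] [Fact (finrank ℝ V = 2)]
  (o : Orientation ℝ V (Fin 2))

lemma exists_areaForm_sub_pos_of_mem_interior_convexHull {s : Set V} {z u : V}
    (hz : z ∈ interior (convexHull ℝ s)) (hu : u ≠ 0) : ∃ x ∈ s, 0 < o.areaForm u (x - z) := by
  simpa only [o.inner_rightAngleRotation_left] using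
    exists_inner_sub_pos_of_mem_interior_convexHull hz
      (o.rightAngleRotation.map_eq_zero_iff.not.2 hu)

lemma areaForm_sub_sub_right (x y z : V) :
    o.areaForm (y - x) (z - y) = o.areaForm (y - x) (z - x) := by
  rw [← sub_sub_sub_cancel_right z y x, map_sub, o.areaForm_apply_self, sub_zero]

lemma areaForm_sub_rev (x y v : V) : o.areaForm (x - y) v = -o.areaForm (y - x) v := by
  rw [← neg_sub, map_neg, LinearMap.neg_apply]

lemma areaForm_nonpos_of_obtuse_of_acute {w u x : V} (hu : ⟪w, u⟫ < 0) (hwu : 0 ≤ o.areaForm w u)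
    (hx : 0 ≤ ⟪w, x⟫) (hwx : 0 ≤ o.areaForm w x) : o.areaForm u x ≤ 0 := by
  have hw : w ≠ 0 := by rintro rfl; simp at hu
  have expand := o.inner_mul_areaForm_sub w u x
  have scaled_nonpos : ‖w‖ ^ 2 * o.areaForm u x ≤ 0 := by
    linarith [mul_nonpos_of_nonpos_of_nonneg hu.le hwx, mul_nonneg hwu hx]
  exact nonpos_of_mul_nonpos_right scaled_nonpos (by positivity)

namespace IsLinkage

variable {r s : ℝ} {a₁ a₂ b₁ b₂ c₁ c₂ : V}

lemma areaForm_right_nonneg (h : IsLinkage r c₁ a₁ a₂ c₂) (h_lean : ⟪c₂ - c₁, a₁ - c₁⟫ < 0)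
    (h_side : 0 ≤ o.areaForm (c₂ - c₁) (a₁ - c₁)) : 0 ≤ o.areaForm (c₂ - c₁) (a₂ - c₂) := by
  rw [areaForm_sub_sub_right]
  by_contra! h_below
  -- The coupler is no longer than the arm, so `a₁` and `a₂` are seen from `c₁` at an acute angle.
  have acute : ‖a₂ - c₁‖ ^ 2 ≤ 2 * ⟪a₂ - c₁, a₁ - c₁⟫ :=
    norm_sq_le_two_mul_inner_of_norm_sub_le <| by
      rw [sub_sub_sub_cancel_right, ← dist_eq_norm', h.norm_left]
      exact h.dist_coupler_le
  have expand := o.inner_mul_inner_add_areaForm_mul_areaForm (c₂ - c₁) (a₂ - c₁) (a₁ - c₁)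
  have obtuse : ‖c₂ - c₁‖ ^ 2 * ⟪a₂ - c₁, a₁ - c₁⟫ ≤ 0 := by
    linarith [mul_nonpos_of_nonneg_of_nonpos h.inner_diagonal_nonneg h_lean.le,
      mul_nonpos_of_nonpos_of_nonneg h_below.le h_side]
  have hw : c₂ - c₁ ≠ 0 := fun hw ↦ by simp [hw] at h_lean
  have inner_nonpos := nonpos_of_mul_nonpos_right obtuse (by positivity)
  have diagonal_eq : a₂ - c₁ = 0 := norm_eq_zero.1 (sq_nonpos_iff _ |>.1 (by linarith))
  simp [diagonal_eq] at h_below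

lemma areaForm_right_le_areaForm_left (h : IsLinkage r c₁ a₁ a₂ c₂)
    (h_lean : ⟪c₂ - c₁, a₁ - c₁⟫ < 0) (h_side : 0 ≤ o.areaForm (c₂ - c₁) (a₁ - c₁)) :
    o.areaForm (c₂ - c₁) (a₂ - c₂) ≤ o.areaForm (c₂ - c₁) (a₁ - c₁) := by
  have pythagoras_left := o.inner_sq_add_areaForm_sq (c₂ - c₁) (a₁ - c₁)
  have pythagoras_right := o.inner_sq_add_areaForm_sq (c₂ - c₁) (a₂ - c₂)
  rw [h.norm_left] at pythagoras_left
  rw [h.reverse.norm_left] at pythagoras_right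
  have lean_sq_le : ⟪c₂ - c₁, a₁ - c₁⟫ ^ 2 ≤ ⟪c₂ - c₁, a₂ - c₂⟫ ^ 2 :=
    sq_le_sq.2 (abs_le_abs_of_nonpos h_lean.le h.inner_right_le_inner_left)
  exact le_of_sq_le_sq (by linarith) h_side

lemma areaForm_arms_pos (ha : IsLinkage r c₁ a₁ a₂ c₂) (hb : IsLinkage s c₁ b₁ b₂ c₂)
    (ha_lean : ⟪c₂ - c₁, a₁ - c₁⟫ < 0) (ha_side : 0 ≤ o.areaForm (c₂ - c₁) (a₁ - c₁))
    (hb_lean : ⟪c₁ - c₂, b₂ - c₂⟫ < 0) (hb_side : 0 ≤ o.areaForm (c₁ - c₂) (b₂ - c₂))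
    (hc₁ : c₁ ∈ interior (convexHull ℝ {a₁, a₂, b₁, b₂})) :
    0 < o.areaForm (a₁ - c₁) (b₂ - c₂) := by
  have a₁_eq : o.areaForm (a₁ - c₁) (a₁ - c₁) = 0 := o.areaForm_apply_self _
  have a₂_nonpos : o.areaForm (a₁ - c₁) (a₂ - c₁) ≤ 0 :=
    areaForm_nonpos_of_obtuse_of_acute o ha_lean ha_side ha.inner_diagonal_nonneg
      (areaForm_sub_sub_right o c₁ c₂ a₂ ▸ ha.areaForm_right_nonneg o ha_lean ha_side)
  have b₁_le : o.areaForm (a₁ - c₁) (b₁ - c₁) ≤ o.areaForm (a₁ - c₁) (b₂ - c₂) := by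
    rw [← sub_nonpos, ← map_sub]
    apply areaForm_nonpos_of_obtuse_of_acute o ha_lean ha_side
    · rw [inner_sub_right, sub_nonneg]
      exact hb.inner_right_le_inner_left
    · rw [map_sub, sub_nonneg, ← neg_le_neg_iff, ← areaForm_sub_rev, ← areaForm_sub_rev]
      exact hb.reverse.areaForm_right_le_areaForm_left o hb_lean hb_side
  have b₂_le : o.areaForm (a₁ - c₁) (b₂ - c₁) ≤ o.areaForm (a₁ - c₁) (b₂ - c₂) := by
    rw [← sub_nonpos, ← map_sub, sub_sub_sub_cancel_left, o.areaForm_swap, neg_nonpos]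
    exact ha_side
  have arm_ne : a₁ - c₁ ≠ 0 := fun h ↦ by simp [h] at ha_lean
  obtain ⟨x, hx, hpos⟩ := exists_areaForm_sub_pos_of_mem_interior_convexHull o hc₁ arm_ne
  rcases hx with rfl | rfl | rfl | rfl <;> linarith

lemma areaForm_right_neg_of_mem_interior (ha : IsLinkage r c₁ a₁ a₂ c₂)
    (hb : IsLinkage s c₁ b₁ b₂ c₂)
    (ha_lean : ⟪c₂ - c₁, a₁ - c₁⟫ < 0) (ha_side : 0 ≤ o.areaForm (c₂ - c₁) (a₁ - c₁))
    (hb_lean : ⟪c₁ - c₂, b₂ - c₂⟫ < 0)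
    (hc₁ : c₁ ∈ interior (convexHull ℝ {a₁, a₂, b₁, b₂})) :
    o.areaForm (c₂ - c₁) (b₂ - c₂) < 0 := by
  by_contra! hb₂_side
  have ha₂_side := ha.areaForm_right_nonneg o ha_lean ha_side
  have hb₁_side : 0 ≤ o.areaForm (c₂ - c₁) (b₁ - c₁) := by
    simpa [← areaForm_sub_rev] using hb.reverse.areaForm_right_nonneg (-o) hb_lean
      (by simpa [← areaForm_sub_rev] using hb₂_side)
  have hne : c₁ - c₂ ≠ 0 := fun h ↦ by simp [h] at hb_lean
  obtain ⟨x, hx, hpos⟩ := exists_areaForm_sub_pos_of_mem_interior_convexHull o hc₁ hne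
  rw [areaForm_sub_rev] at hpos
  rw [areaForm_sub_sub_right] at ha₂_side hb₂_side
  rcases hx with rfl | rfl | rfl | rfl <;> linarith

lemma notMem_interior_of_areaForm_nonneg (ha : IsLinkage r c₁ a₁ a₂ c₂)
    (hb : IsLinkage s c₁ b₁ b₂ c₂)
    (ha_lean : ⟪c₂ - c₁, a₁ - c₁⟫ < 0) (ha_side : 0 ≤ o.areaForm (c₂ - c₁) (a₁ - c₁))
    (hb_lean : ⟪c₁ - c₂, b₂ - c₂⟫ < 0)
    (hc₁ : c₁ ∈ interior (convexHull ℝ {a₁, a₂, b₁, b₂})) :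
    c₂ ∉ interior (convexHull ℝ {a₁, a₂, b₁, b₂}) := by
  intro hc₂
  have hb_side : 0 ≤ o.areaForm (c₁ - c₂) (b₂ - c₂) := by
    rw [areaForm_sub_rev, neg_nonneg]
    exact (ha.areaForm_right_neg_of_mem_interior o hb ha_lean ha_side hb_lean hc₁).le
  have reorder : ({a₁, a₂, b₁, b₂} : Set V) = {b₂, b₁, a₂, a₁} := by grind
  have steeper_b := ha.areaForm_arms_pos o hb ha_lean ha_side hb_lean hb_side hc₁
  have steeper_a := hb.reverse.areaForm_arms_pos o ha.reverse hb_lean hb_side ha_lean ha_side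
    (reorder ▸ hc₂)
  rw [o.areaForm_swap] at steeper_a
  linarith

lemma notMem_interior_of_inner_neg (ha : IsLinkage r c₁ a₁ a₂ c₂) (hb : IsLinkage s c₁ b₁ b₂ c₂)
    (ha_lean : ⟪c₂ - c₁, a₁ - c₁⟫ < 0) (hb_lean : ⟪c₁ - c₂, b₂ - c₂⟫ < 0)
    (hc₁ : c₁ ∈ interior (convexHull ℝ {a₁, a₂, b₁, b₂})) :
    c₂ ∉ interior (convexHull ℝ {a₁, a₂, b₁, b₂}) := by
  have : FiniteDimensional ℝ V := .of_fact_finrank_eq_two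
  let o : Orientation ℝ V (Fin 2) := (finBasisOfFinrankEq ℝ V Fact.out).orientation
  rcases le_total 0 (o.areaForm (c₂ - c₁) (a₁ - c₁)) with ha_above | ha_below
  · exact ha.notMem_interior_of_areaForm_nonneg o hb ha_lean ha_above hb_lean hc₁
  · exact ha.notMem_interior_of_areaForm_nonneg (-o) hb ha_lean (by simpa using ha_below)
      hb_lean hc₁

end IsLinkage

theorem middle_arc_disks_intersect_general {r s : ℝ} {a₁ a₂ b₁ b₂ c₁ c₂ : V}
    (ha : dist a₁ a₂ ≤ r) (hb : dist b₁ b₂ ≤ s)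
    (hc₁a : dist c₁ a₁ = r) (hc₁b : dist c₁ b₁ = s)
    (hc₂a : dist c₂ a₂ = r) (hc₂b : dist c₂ b₂ = s)
    (hc₁ : c₁ ∈ interior (convexHull ℝ {a₁, a₂, b₁, b₂}))
    (hc₂ : c₂ ∈ interior (convexHull ℝ {a₁, a₂, b₁, b₂})) :
    dist c₁ c₂ < max r s := by
  by_contra! far
  have linkage_a : IsLinkage r c₁ a₁ a₂ c₂ := ⟨hc₁a, hc₂a, ha, (le_max_left r s).trans far⟩
  have linkage_b : IsLinkage s c₁ b₁ b₂ c₂ := ⟨hc₁b, hc₂b, hb, (le_max_right r s).trans far⟩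
  have : Nontrivial V := nontrivial_of_finrank_eq_succ (R := ℝ) (n := 1) Fact.out
  have hne := linkage_a.pivots_ne_of_mem_interior linkage_b hc₁
  have swap_ab : ({a₁, a₂, b₁, b₂} : Set V) = {b₁, b₂, a₁, a₂} := by grind
  have swap_ends : ({a₁, a₂, b₁, b₂} : Set V) = {a₂, a₁, b₂, b₁} := by grind
  have lean_at_c₁ := linkage_a.inner_left_neg_or_inner_left_neg linkage_b hne hc₁
  have lean_at_c₂ := linkage_a.reverse.inner_left_neg_or_inner_left_neg linkage_b.reverse hne.symm
    (swap_ends ▸ hc₂)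
  rcases lean_at_c₁, lean_at_c₂ with ⟨a₁_lean | b₁_lean, a₂_lean | b₂_lean⟩
  · exact linkage_a.not_inner_right_neg_of_inner_left_neg a₁_lean a₂_lean
  · exact linkage_a.notMem_interior_of_inner_neg linkage_b a₁_lean b₂_lean hc₁ hc₂
  · exact linkage_b.notMem_interior_of_inner_neg linkage_a b₁_lean a₂_lean (swap_ab ▸ hc₁)
      (swap_ab ▸ hc₂)
  · exact linkage_b.not_inner_right_neg_of_inner_left_neg b₁_lean b₂_lean

end Plane

/-- Let `a₁, a₂` and `b₁, b₂` be the centers of the adjacent unit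
circles at the initial and final points (so `dist a₁ a₂ = 2 = dist b₁ b₂`), satisfying
the condition-D inequalities `dist a₁ b₁ < 4` and `dist a₂ b₂ < 4`.  If `c₁, c₂` are
centers of unit circles externally tangent to the corresponding pairs of adjacent
circles (`dist c₁ a₁ = dist c₁ b₁ = 2` and `dist c₂ a₂ = dist c₂ b₂ = 2`) and lie in
the interior of the convex hull of `{a₁, a₂, b₁, b₂}`, then `dist c₁ c₂ < 2`: the two
unit disks centered at `c₁` and `c₂` have intersecting interiors. -/
theorem middle_arc_disks_intersect (a₁ a₂ b₁ b₂ c₁ c₂ : E2)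
    (ha : dist a₁ a₂ = 2) (hb : dist b₁ b₂ = 2)
    (hab₁ : dist a₁ b₁ < 4) (hab₂ : dist a₂ b₂ < 4)
    (hc₁a : dist c₁ a₁ = 2) (hc₁b : dist c₁ b₁ = 2)
    (hc₂a : dist c₂ a₂ = 2) (hc₂b : dist c₂ b₂ = 2)
    (hc₁ : c₁ ∈ interior (convexHull ℝ ({a₁, a₂, b₁, b₂} : Set E2)))
    (hc₂ : c₂ ∈ interior (convexHull ℝ ({a₁, a₂, b₁, b₂} : Set E2))) :
    dist c₁ c₂ < 2 := by
  simpa using middle_arc_disks_intersect_general ha.le hb.le hc₁a hc₁b hc₂a hc₂b hc₁ hc₂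
end
end

section
/- Let 0 < b < 1 and let f : [0, b] → ℝ be twice continuously differentiable with f(0) = 0, f'(0) = 0, and f''(t) ≤ (1 + f'(t)²)^{3/2} for all t ∈ [0, b] (i.e., the curvature of the graph of f is at most 1). Then f(t) ≤ 1 − √(1 − t²) for all t ∈ [0, b]; that is, the graph of f stays on or below the lower arc of the unit circle centered at (0, 1). -/
noncomputable section

/-!
Let `φ = arctan f'` be the slope angle of the graph. The derivative of `sin φ` is exactly the signed
curvature `f'' / (1 + f' ^ 2) ^ (3 / 2)`, so curvature at most `1 / r` and a nonpositive initial
slope give `sin φ ≤ (t - a) / r`. On the circle of radius `r` this is an equality: its lower arc has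
slope angle `arcsin ((t - a) / r)`. Hence the graph is nowhere steeper than the arc, and integrating
the slopes once more compares the heights.
-/

open Real Set

/-- The height, at abscissa `t`, of the lower arc of the circle of radius `r` centered at `(0, r)`,
the circle that touches the horizontal axis at the origin from above. For `|t| > r` the square root
takes the value `0`, and the formula gives the height `r` of the center. -/
def circleLowerArc (r t : ℝ) : ℝ := r - √(r ^ 2 - t ^ 2)

theorem circleLowerArc_zero_right {r : ℝ} (hr : 0 ≤ r) : circleLowerArc r 0 = 0 := by
  simp [circleLowerArc, sqrt_sq hr]

theorem continuous_circleLowerArc (r : ℝ) : Continuous (circleLowerArc r) := by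
  unfold circleLowerArc
  fun_prop

theorem hasDerivAt_circleLowerArc {r t : ℝ} (ht : |t| < r) :
    HasDerivAt (circleLowerArc r) (tan (arcsin (t / r))) t := by
  have hr : 0 < r := (abs_nonneg t).trans_lt ht
  have hpos : 0 < r ^ 2 - t ^ 2 := sub_pos.2 (sq_lt_sq' (abs_lt.1 ht).1 (abs_lt.1 ht).2)
  have hsqrt : √(1 - (t / r) ^ 2) = √(r ^ 2 - t ^ 2) / r := by
    rw [show 1 - (t / r) ^ 2 = (r ^ 2 - t ^ 2) / r ^ 2 by field_simp, sqrt_div hpos.le,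
      sqrt_sq hr.le]
  have hderiv := ((((hasDerivAt_id t).pow 2).const_sub (r ^ 2)).sqrt hpos.ne').const_sub r
  refine hderiv.congr_deriv ?_
  rw [tan_arcsin, hsqrt]
  simp only [Nat.cast_ofNat, id_eq, Nat.add_one_sub_one, pow_one, mul_one, Pi.pow_apply]
  field_simp

theorem one_add_sq_rpow_three_halves (p : ℝ) :
    (1 + p ^ 2) ^ ((3 : ℝ) / 2) = √(1 + p ^ 2) * (1 + p ^ 2) := by
  rw [sqrt_eq_rpow, ← rpow_add_one (by positivity)]
  norm_num

theorem hasDerivWithinAt_sin_arctan_comp {g : ℝ → ℝ} {g' t : ℝ} {s : Set ℝ}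
    (hg : HasDerivWithinAt g g' s t) :
    HasDerivWithinAt (fun u => sin (arctan (g u))) (g' / (1 + g t ^ 2) ^ ((3 : ℝ) / 2)) s t := by
  refine hg.arctan.sin.congr_deriv ?_
  rw [cos_arctan, one_add_sq_rpow_three_halves]
  field_simp

theorem sin_arctan_le_add_mul_of_deriv_right_le {a b κ : ℝ} {g g' : ℝ → ℝ}
    (hg : ContinuousOn g (Icc a b))
    (hg' : ∀ t ∈ Ico a b, HasDerivWithinAt g (g' t) (Ici t) t)
    (hbound : ∀ t ∈ Ico a b, g' t ≤ κ * (1 + g t ^ 2) ^ ((3 : ℝ) / 2)) :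
    ∀ t ∈ Icc a b, sin (arctan (g t)) ≤ sin (arctan (g a)) + κ * (t - a) := by
  have hline (t : ℝ) : HasDerivAt (fun u => sin (arctan (g a)) + κ * (u - a)) κ t := by
    simpa using (((hasDerivAt_id t).sub_const a).const_mul κ).const_add (sin (arctan (g a)))
  refine image_le_of_deriv_right_le_deriv_boundary
    (continuous_sin.comp_continuousOn (continuous_arctan.comp_continuousOn hg))
    (fun t ht => hasDerivWithinAt_sin_arctan_comp (hg' t ht)) (by simp)
    (fun t _ => (hline t).continuousAt.continuousWithinAt)
    (fun t _ => (hline t).hasDerivWithinAt) ?_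
  exact fun t ht => (div_le_iff₀ (by positivity)).2 (hbound t ht)

theorem le_tan_arcsin_of_sin_arctan_le {p s : ℝ} (hs : s < 1) (h : sin (arctan p) ≤ s) :
    p ≤ tan (arcsin s) := by
  have hangle : arctan p ≤ arcsin s :=
    (le_arcsin_iff_sin_le' ⟨neg_pi_div_two_lt_arctan p, (arctan_lt_pi_div_two p).le⟩).2 h
  have harcsin : arcsin s ∈ Ioo (-(π / 2)) (π / 2) :=
    ⟨(neg_pi_div_two_lt_arctan p).trans_le hangle, arcsin_lt_pi_div_two.2 hs⟩
  simpa only [tan_arctan] using strictMonoOn_tan.monotoneOn (arctan_mem_Ioo p) harcsin hangle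

theorem le_tan_arcsin_of_deriv_right_le {a b r : ℝ} (hb : b ≤ a + r) {g g' : ℝ → ℝ}
    (hg : ContinuousOn g (Ico a b))
    (hg' : ∀ t ∈ Ico a b, HasDerivWithinAt g (g' t) (Ici t) t)
    (hga : g a ≤ 0)
    (hbound : ∀ t ∈ Ico a b, g' t ≤ r⁻¹ * (1 + g t ^ 2) ^ ((3 : ℝ) / 2)) :
    ∀ t ∈ Ico a b, g t ≤ tan (arcsin ((t - a) / r)) := by
  intro t ht
  have hr : 0 < r := by linarith [ht.1, ht.2]
  have hsub : Icc a t ⊆ Ico a b := Icc_subset_Ico_right ht.2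
  have hsub' : Ico a t ⊆ Ico a b := Ico_subset_Icc_self.trans hsub
  refine le_tan_arcsin_of_sin_arctan_le ((div_lt_one hr).2 (by linarith [ht.2])) ?_
  calc sin (arctan (g t))
      ≤ sin (arctan (g a)) + r⁻¹ * (t - a) :=
        sin_arctan_le_add_mul_of_deriv_right_le (hg.mono hsub)
          (fun u hu => hg' u (hsub' hu)) (fun u hu => hbound u (hsub' hu)) t ⟨ht.1, le_rfl⟩
    _ ≤ r⁻¹ * (t - a) := add_le_of_nonpos_left (sin_arctan_le_zero.2 hga)
    _ = (t - a) / r := (div_eq_inv_mul _ _).symm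

theorem graph_with_curvature_at_most_one_stays_below_circle_general
    {a b r : ℝ} (hr : 0 < r) (hb : b ≤ a + r) {f f' f'' : ℝ → ℝ}
    (hf : ContinuousOn f (Icc a b))
    (hf' : ∀ t ∈ Ico a b, HasDerivWithinAt f (f' t) (Ici t) t)
    (hf'cont : ContinuousOn f' (Ico a b))
    (hf'' : ∀ t ∈ Ico a b, HasDerivWithinAt f' (f'' t) (Ici t) t)
    (hf'a : f' a ≤ 0)
    (hcurv : ∀ t ∈ Ico a b, f'' t ≤ r⁻¹ * (1 + f' t ^ 2) ^ ((3 : ℝ) / 2)) :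
    ∀ t ∈ Icc a b, f t ≤ f a + circleLowerArc r (t - a) := by
  have harc (t : ℝ) (ht : t ∈ Ico a b) : HasDerivAt (fun u => f a + circleLowerArc r (u - a))
      (tan (arcsin ((t - a) / r))) t := by
    have habs : |t - a| < r := abs_lt.2 ⟨by linarith [ht.1], by linarith [ht.2]⟩
    exact ((hasDerivAt_circleLowerArc habs).comp_sub_const t a).const_add (f a)
  exact image_le_of_deriv_right_le_deriv_boundary hf hf'
    (by simp [circleLowerArc_zero_right hr.le])
    (((continuous_circleLowerArc r).comp (continuous_sub_right a)).const_add (f a)).continuousOn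
    (fun t ht => (harc t ht).hasDerivWithinAt)
    (le_tan_arcsin_of_deriv_right_le hb hf'cont hf'' hf'a hcurv)

/-- Let `0 < b < 1` and let `f : [0, b] → ℝ` be twice continuously
differentiable (with first and second derivatives `f'` and `f''`, the latter
continuous), with `f 0 = 0`, `f' 0 = 0`, and with the curvature of its graph at most
`1`, i.e. `f'' t ≤ (1 + (f' t)²)^(3/2)` on `[0, b]`.  Then
`f t ≤ 1 - √(1 - t²)` on `[0, b]`: the graph of `f` stays on or below the lower arc of
the unit circle centered at `(0, 1)`. -/
theorem graph_with_curvature_at_most_one_stays_below_circle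
    (b : ℝ) (hb0 : 0 < b) (hb1 : b < 1)
    (f f' f'' : ℝ → ℝ)
    (hf' : ∀ t ∈ Set.Icc 0 b, HasDerivAt f (f' t) t)
    (hf'' : ∀ t ∈ Set.Icc 0 b, HasDerivAt f' (f'' t) t)
    (hf''cont : ContinuousOn f'' (Set.Icc 0 b))
    (hf0 : f 0 = 0) (hf'0 : f' 0 = 0)
    (hcurv : ∀ t ∈ Set.Icc 0 b, f'' t ≤ (1 + (f' t) ^ 2) ^ ((3 : ℝ) / 2)) :
    ∀ t ∈ Set.Icc 0 b, f t ≤ 1 - Real.sqrt (1 - t ^ 2) := by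
  have hsub : Ico 0 b ⊆ Icc 0 b := Ico_subset_Icc_self
  simpa [circleLowerArc, hf0] using
    graph_with_curvature_at_most_one_stays_below_circle_general one_pos (by linarith)
      (HasDerivAt.continuousOn hf') (fun t ht => (hf' t (hsub ht)).hasDerivWithinAt)
      ((HasDerivAt.continuousOn hf'').mono hsub)
      (fun t ht => (hf'' t (hsub ht)).hasDerivWithinAt) hf'0.le
      (fun t ht => by simpa using hcurv t (hsub ht))
end
end
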